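/- The mechanism ScaledGreedy is (2+γ)α-consistent: if it is run on an instance p and predicted instance p̂ with p̂ = p, using a predicted schedule x̂ satisfying MS(p̂, x̂) ≤ α·OPT(p̂) for some α ≥ 1 and any parameter γ ≥ 0, then the allocation x it outputs satisfies MS(p, x) ≤ (2+γ)·α·OPT(p). -/

import Mathlib

open scoped Classical
noncomputable section
variable {n m : ℕ}

/-- The makespan of allocation `a` under instance `p`. -/
def MS [NeZero n] (p : Fin n → Fin m → ℝ) (a : Fin m → Fin n) : ℝ :=
  Finset.univ.sup' Finset.univ_nonempty fun i => ∑ j, if a j = i then p i j else 0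

/-- The optimal makespan of instance `p`. -/
def OPT [NeZero n] (p : Fin n → Fin m → ℝ) : ℝ :=
  Finset.univ.inf' Finset.univ_nonempty fun a : Fin m → Fin n => MS p a

lemma exists_argmin [NeZero n] (v : Fin n → ℝ) :
    (Finset.univ.filter fun i => ∀ i', v i ≤ v i').Nonempty := by
  obtain ⟨i, -, hi⟩ := Finset.exists_min_image Finset.univ v Finset.univ_nonempty
  exact ⟨i, by
    simp only [Finset.mem_filter, Finset.mem_univ, true_and]
    exact fun i' => hi i' (Finset.mem_univ i')⟩

/-- The state of the iterative loop of `ScaledGreedy`: the sets `J_i` and the scalars `r(i,j)`. -/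
structure SGState (n m : ℕ) where
  J : Fin n → Finset (Fin m)
  r : Fin n → Fin m → ℝ

/-- The set `∪_i J_i` of jobs already put aside by the loop. -/
def sgAssigned (s : SGState n m) : Finset (Fin m) :=
  Finset.univ.filter fun j => ∃ i, j ∈ s.J i

/-- The set `I` of machines whose set `J_i` is not yet full. -/
def sgI [NeZero n] (phat : Fin n → Fin m → ℝ) (xhat : Fin m → Fin n) (γ : ℝ)
    (s : SGState n m) : Finset (Fin n) :=
  Finset.univ.filter fun i => ∑ j ∈ s.J i, phat i j < γ * MS phat xhat

/-- The set `T` of candidate pairs `(i,j)`. -/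
def sgT [NeZero n] (phat : Fin n → Fin m → ℝ) (xhat : Fin m → Fin n) (γ : ℝ)
    (s : SGState n m) : Finset (Fin n × Fin m) :=
  Finset.univ.filter fun q =>
    q.2 ∉ sgAssigned s ∧ q.1 ∈ sgI phat xhat γ s ∧
    phat q.1 q.2 < phat (xhat q.2) q.2 ∧
    ∀ i' ∈ sgI phat xhat γ s, phat i' q.2 < phat (xhat q.2) q.2 → phat q.1 q.2 ≤ phat i' q.2

/-- The initial state of `ScaledGreedy`: `J_i = ∅` and `r(i,j) = max(p̂(î_j,j)/p̂(i,j), 1)`. -/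
def sgInit (phat : Fin n → Fin m → ℝ) (xhat : Fin m → Fin n) : SGState n m :=
  ⟨fun _ => ∅, fun i j => max (phat (xhat j) j / phat i j) 1⟩

/-- One iteration of the while-loop of `ScaledGreedy`: a pair `(i*,j*) ∈ T` maximizing
`p̂(î_j,j)/p̂(i,j)` is selected, `j*` is added to `J_{i*}`, and `r(i,j*)` is set to `1` for
every machine `i` with `p̂(i*,j*) ≤ p̂(i,j*)`. -/
def SGStep [NeZero n] (phat : Fin n → Fin m → ℝ) (xhat : Fin m → Fin n) (γ : ℝ)
    (s s' : SGState n m) : Prop :=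
  ∃ q ∈ sgT phat xhat γ s,
    (∀ q' ∈ sgT phat xhat γ s,
      phat (xhat q'.2) q'.2 / phat q'.1 q'.2 ≤ phat (xhat q.2) q.2 / phat q.1 q.2) ∧
    s'.J = (fun i => if i = q.1 then insert q.2 (s.J i) else s.J i) ∧
    s'.r = fun i j => if j = q.2 ∧ phat q.1 q.2 ≤ phat i q.2 then 1 else s.r i j

/-- `s` is the state of `ScaledGreedy` at termination: it is reachable from the initial state
by iterations of the loop, and `T = ∅` so the loop has terminated. -/
def SGFinal [NeZero n] (phat : Fin n → Fin m → ℝ) (xhat : Fin m → Fin n) (γ : ℝ)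
    (s : SGState n m) : Prop :=
  Relation.ReflTransGen (SGStep phat xhat γ) (sgInit phat xhat) s ∧ sgT phat xhat γ s = ∅

/-- The allocation computed by `ScaledGreedy` from the terminal state `s`: each job `j` goes to
a machine minimizing `r(i,j)·p(i,j)`, with ties broken in favor of `î_j` first, then the machine
`i'` with `j ∈ J_{i'}` (if any), then the smallest-index machine. -/
def sgAssign [NeZero n] (s : SGState n m) (xhat : Fin m → Fin n)
    (p : Fin n → Fin m → ℝ) (j : Fin m) : Fin n :=
  let v : Fin n → ℝ := fun i => s.r i j * p i j
  if ∀ i, v (xhat j) ≤ v i then xhat j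
  else if h : ∃ i', j ∈ s.J i' ∧ ∀ i, v i' ≤ v i then Classical.choose h
  else (Finset.univ.filter fun i => ∀ i', v i ≤ v i').min' (exists_argmin v)

/-- `max_j r(i,j)`, the largest scalar of machine `i`. -/
def maxScalar [NeZero m] (r : Fin n → Fin m → ℝ) (i : Fin n) : ℝ :=
  Finset.univ.sup' Finset.univ_nonempty fun j => r i j

/-! The loop maintains, for every job `j`, a machine minimizing the scaled time `r(i,j)·p̂(i,j)`.
Initially that scaled time is `max (p̂(î_j,j)) (p̂(i,j))`, which is minimal at `î_j`. Once `j` joins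
`J_i`, the scaled time of `i` drops to `p̂(i,j) < p̂(î_j,j)`; the machines faster than `i` keep a
scaled time of at least `p̂(î_j,j)`, and the others have their own time, so `i` is a minimizer.
The tie-breaking rule therefore sends `j` either to `î_j` or to a machine `i` with `j ∈ J_i`, and
the load of `i` exceeds its load under `x̂` by at most `∑ j ∈ J_i, p̂(i,j)`. A machine receives
jobs only while that sum is below `γ·MS(p̂,x̂)`, and the last one adds at most `MS(p̂,x̂)`, for a
total of `(1 + (1 + γ))·MS(p̂,x̂)`. -/

section Makespan

variable {p : Fin n → Fin m → ℝ}

/-- The load of machine `i`: the total processing time of the jobs that `a` assigns to it. The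
makespan is the largest load. -/
def load (p : Fin n → Fin m → ℝ) (a : Fin m → Fin n) (i : Fin n) : ℝ :=
  ∑ j with a j = i, p i j

lemma load_nonneg (hp : ∀ i j, 0 ≤ p i j) (a : Fin m → Fin n) (i : Fin n) : 0 ≤ load p a i :=
  Finset.sum_nonneg fun j _ => hp i j

lemma apply_le_load (hp : ∀ i j, 0 ≤ p i j) (a : Fin m → Fin n) (j : Fin m) :
    p (a j) j ≤ load p a (a j) :=
  Finset.single_le_sum (f := p (a j)) (fun j' _ => hp (a j) j') (by simp)

lemma load_le_load_add_sum (hp : ∀ i j, 0 ≤ p i j) {a b : Fin m → Fin n}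
    {J : Fin n → Finset (Fin m)} (hab : ∀ j, a j = b j ∨ j ∈ J (a j)) (i : Fin n) :
    load p a i ≤ load p b i + ∑ j ∈ J i, p i j := by
  have hsub : Finset.univ.filter (a · = i) ⊆ Finset.univ.filter (b · = i) ∪ J i := by
    intro j hj
    obtain rfl : a j = i := by simpa using hj
    simpa [eq_comm] using hab j
  calc load p a i ≤ ∑ j ∈ Finset.univ.filter (b · = i) ∪ J i, p i j :=
        Finset.sum_le_sum_of_subset_of_nonneg hsub fun j _ _ => hp i j
    _ ≤ load p b i + ∑ j ∈ J i, p i j := by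
        rw [load, ← Finset.sum_union_inter]
        exact le_add_of_nonneg_right (Finset.sum_nonneg fun j _ => hp i j)

variable [NeZero n]

lemma MS_le_iff {a : Fin m → Fin n} {B : ℝ} : MS p a ≤ B ↔ ∀ i, load p a i ≤ B := by
  simp [MS, load, Finset.sum_filter]

lemma load_le_MS (p : Fin n → Fin m → ℝ) (a : Fin m → Fin n) (i : Fin n) : load p a i ≤ MS p a :=
  MS_le_iff.1 le_rfl i

lemma MS_nonneg (hp : ∀ i j, 0 ≤ p i j) (a : Fin m → Fin n) : 0 ≤ MS p a :=
  (load_nonneg hp a 0).trans (load_le_MS p a 0)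

lemma apply_le_MS (hp : ∀ i j, 0 ≤ p i j) (a : Fin m → Fin n) (j : Fin m) : p (a j) j ≤ MS p a :=
  (apply_le_load hp a j).trans (load_le_MS p a (a j))

end Makespan

lemma mem_update_insert_iff {ι κ : Type*} [DecidableEq ι] [DecidableEq κ] {J : ι → Finset κ}
    {i i₀ : ι} {j j₀ : κ} :
    j ∈ Function.update J i₀ (insert j₀ (J i₀)) i ↔ j ∈ J i ∨ i = i₀ ∧ j = j₀ := by
  rcases eq_or_ne i i₀ with rfl | hi <;> simp [*, or_comm]

section Loop

variable {p : Fin n → Fin m → ℝ} {xhat : Fin m → Fin n} {γ : ℝ} {s s' : SGState n m}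

lemma mem_sgAssigned {j : Fin m} : j ∈ sgAssigned s ↔ ∃ i, j ∈ s.J i := by
  simp [sgAssigned]

lemma sgInit_r_mul_eq_max {i : Fin n} {j : Fin m} (hp : 0 < p i j) :
    (sgInit p xhat).r i j * p i j = max (p (xhat j) j) (p i j) := by
  rw [sgInit, max_mul_of_nonneg _ _ hp.le, div_mul_cancel₀ _ hp.ne', one_mul]

/-- Machine `i` minimizes the scaled processing time `r(·,j)·p(·,j)` of job `j`. -/
def IsScaledMin (s : SGState n m) (p : Fin n → Fin m → ℝ) (j : Fin m) (i : Fin n) : Prop :=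
  ∀ i', s.r i j * p i j ≤ s.r i' j * p i' j

variable [NeZero n]

lemma sgAssign_eq_or_mem_of_isScaledMin {j : Fin m}
    (h : IsScaledMin s p j (xhat j) ∨ ∃ i, j ∈ s.J i ∧ IsScaledMin s p j i) :
    sgAssign s xhat p j = xhat j ∨ j ∈ s.J (sgAssign s xhat p j) := by
  unfold sgAssign
  dsimp only
  split_ifs with hxhat hJ
  · exact .inl rfl
  · exact .inr (Classical.choose_spec hJ).1
  · exact absurd h (not_or.2 ⟨hxhat, hJ⟩)

/-- States the loop of `ScaledGreedy` can reach from the initial one, whether or not it could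
continue from there. -/
def SGReachable (p : Fin n → Fin m → ℝ) (xhat : Fin m → Fin n) (γ : ℝ) (s : SGState n m) : Prop :=
  Relation.ReflTransGen (SGStep p xhat γ) (sgInit p xhat) s

lemma SGStep.exists_insert (h : SGStep p xhat γ s s') :
    ∃ i₀ j₀, j₀ ∉ sgAssigned s ∧ ∑ j ∈ s.J i₀, p i₀ j < γ * MS p xhat ∧
      p i₀ j₀ < p (xhat j₀) j₀ ∧
      s'.J = Function.update s.J i₀ (insert j₀ (s.J i₀)) ∧
      ∀ i j, s'.r i j = if j = j₀ ∧ p i₀ j₀ ≤ p i j₀ then 1 else s.r i j := by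
  obtain ⟨⟨i₀, j₀⟩, hT, -, hJ, hr⟩ := h
  simp only [sgT, sgI, Finset.mem_filter, Finset.mem_univ, true_and] at hT
  obtain ⟨hj₀, hI, hlt, -⟩ := hT
  refine ⟨i₀, j₀, hj₀, hI, hlt, ?_, fun i j => congrFun₂ hr i j⟩
  ext i : 1
  rw [hJ]
  rcases eq_or_ne i i₀ with rfl | hi <;> simp [*]

namespace SGReachable

lemma r_eq_of_notMem_sgAssigned (hs : SGReachable p xhat γ s) {j : Fin m}
    (hj : j ∉ sgAssigned s) (i : Fin n) : s.r i j = (sgInit p xhat).r i j := by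
  induction hs with
  | refl => rfl
  | tail _ hstep ih =>
    obtain ⟨i₀, j₀, -, -, -, hJ, hr⟩ := hstep.exists_insert
    simp only [mem_sgAssigned, hJ, mem_update_insert_iff, not_exists, not_or] at hj ih
    have hne : j ≠ j₀ := fun h => (hj i₀).2 ⟨rfl, h⟩
    rw [hr, if_neg fun h => hne h.1, ih fun i => (hj i).1]

lemma isScaledMin_of_notMem_sgAssigned (hp : ∀ i j, 0 < p i j) (hs : SGReachable p xhat γ s)
    {j : Fin m} (hj : j ∉ sgAssigned s) : IsScaledMin s p j (xhat j) := by
  intro i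
  rw [hs.r_eq_of_notMem_sgAssigned hj, hs.r_eq_of_notMem_sgAssigned hj,
    sgInit_r_mul_eq_max (hp _ _), sgInit_r_mul_eq_max (hp _ _), max_self]
  exact le_max_left _ _

lemma isScaledMin_of_mem (hp : ∀ i j, 0 < p i j) (hs : SGReachable p xhat γ s)
    {i : Fin n} {j : Fin m} (hj : j ∈ s.J i) : IsScaledMin s p j i := by
  induction hs with
  | refl => simp [sgInit] at hj
  | tail hs hstep ih =>
    obtain ⟨i₀, j₀, hj₀, -, hlt, hJ, hr⟩ := hstep.exists_insert
    intro i'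
    rw [hJ, mem_update_insert_iff] at hj
    rcases hj with hj | ⟨rfl, rfl⟩
    · have hne : j ≠ j₀ := by rintro rfl; exact hj₀ (mem_sgAssigned.2 ⟨i, hj⟩)
      simpa only [hr, hne, false_and, if_false] using ih hj i'
    · rw [hr i, if_pos ⟨rfl, le_rfl⟩, one_mul, hr i']
      split_ifs with hle
      · simpa using hle
      · rw [r_eq_of_notMem_sgAssigned hs hj₀, sgInit_r_mul_eq_max (hp _ _)]
        exact hlt.le.trans (le_max_left _ _)

lemma sum_J_le (hp : ∀ i j, 0 ≤ p i j) (hγ : -1 ≤ γ) (hs : SGReachable p xhat γ s) (i : Fin n) :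
    ∑ j ∈ s.J i, p i j ≤ (1 + γ) * MS p xhat := by
  induction hs with
  | refl => simpa [sgInit] using mul_nonneg (by linarith) (MS_nonneg hp xhat)
  | @tail s _ _ hstep ih =>
    obtain ⟨i₀, j₀, hj₀, hI, hlt, hJ, -⟩ := hstep.exists_insert
    rw [hJ]
    rcases eq_or_ne i i₀ with rfl | hi
    · have hnot : j₀ ∉ s.J i := fun h => hj₀ (mem_sgAssigned.2 ⟨i, h⟩)
      rw [Function.update_self, Finset.sum_insert hnot]
      linarith [apply_le_MS hp xhat j₀]
    · rwa [Function.update_of_ne hi]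

lemma sgAssign_eq_or_mem (hp : ∀ i j, 0 < p i j) (hs : SGReachable p xhat γ s) (j : Fin m) :
    sgAssign s xhat p j = xhat j ∨ j ∈ s.J (sgAssign s xhat p j) := by
  apply sgAssign_eq_or_mem_of_isScaledMin
  by_cases hj : j ∈ sgAssigned s
  · obtain ⟨i, hi⟩ := mem_sgAssigned.1 hj
    exact .inr ⟨i, hi, hs.isScaledMin_of_mem hp hi⟩
  · exact .inl (hs.isScaledMin_of_notMem_sgAssigned hp hj)

lemma MS_sgAssign_le (hp : ∀ i j, 0 < p i j) (hγ : -1 ≤ γ) (hs : SGReachable p xhat γ s) :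
    MS p (sgAssign s xhat p) ≤ (2 + γ) * MS p xhat := by
  have hp₀ : ∀ i j, 0 ≤ p i j := fun i j => (hp i j).le
  refine MS_le_iff.2 fun i => ?_
  calc load p (sgAssign s xhat p) i
      ≤ load p xhat i + ∑ j ∈ s.J i, p i j := load_le_load_add_sum hp₀ (hs.sgAssign_eq_or_mem hp) i
    _ ≤ MS p xhat + (1 + γ) * MS p xhat := add_le_add (load_le_MS p xhat i) (hs.sum_J_le hp₀ hγ i)
    _ = (2 + γ) * MS p xhat := by ring

end SGReachable

end Loop

theorem sg_consistency_general [NeZero n]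
    (p : Fin n → Fin m → ℝ) (xhat : Fin m → Fin n) (γ α : ℝ) (s : SGState n m)
    (hp : ∀ i j, 0 < p i j) (hMS : MS p xhat ≤ α * OPT p) (hγ : -1 ≤ γ)
    (hs : SGReachable p xhat γ s) :
    MS p (sgAssign s xhat p) ≤ (2 + γ) * α * OPT p :=
  calc MS p (sgAssign s xhat p) ≤ (2 + γ) * MS p xhat := hs.MS_sgAssign_le hp hγ
    _ ≤ (2 + γ) * (α * OPT p) := mul_le_mul_of_nonneg_left hMS (by linarith)
    _ = (2 + γ) * α * OPT p := (mul_assoc _ _ _).symm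

/-- `ScaledGreedy` is `(2+γ)α`-consistent: when `p̂ = p` and the predicted
schedule satisfies `MS(p̂,x̂) ≤ α·OPT(p̂)`, the output allocation has makespan at most
`(2+γ)·α·OPT(p)`. -/
theorem sg_consistency [NeZero n]
    (p phat : Fin n → Fin m → ℝ) (xhat : Fin m → Fin n) (γ α : ℝ) (s : SGState n m)
    (hp : ∀ i j, 0 < p i j) (hphat : ∀ i j, 0 < phat i j)
    (hα : 1 ≤ α) (hMS : MS phat xhat ≤ α * OPT phat) (hγ : 0 ≤ γ)
    (hfinal : SGFinal phat xhat γ s) (hpred : phat = p) :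
    MS p (sgAssign s xhat p) ≤ (2 + γ) * α * OPT p := by
  subst hpred
  exact sg_consistency_general phat xhat γ α s hp hMS (by linarith) hfinal.1
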